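/- Let (J,Q,1) be a weak quadratic Jordan algebra over a field k, let ε ∈ {1,−1}, let δ be an ε-derivation of J, and let a ∈ J be invertible. Then δ(a^{-1}) = −ε·δ(a)·Q_a^{-1}. -/

import Mathlib

/-!
Write `b = a⁻¹`, so that `b·Q_a = a`. The identity `QJ2` with `b` in the role of the free vector
gives `a·Q_{c,b} = 2c` for all `c`, because `Q_{a,a} = 2Q_a`; used again with `b` in the role of
the second parameter it yields `b·Q_{a,y} = 2y` for all `y` (`Qbil_inverse`). Applying `δ` to
`a = b·Q_a` then gives `δ(a) = ε·δ(b)·Q_a + 2δ(a)`, which is solved for `δ(b)` using `ε² = 1`.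
No linearization of the axioms is needed, so the size of `k` plays no role.
-/

/-- A weak quadratic Jordan algebra `(J, Q, 1)` over a field `k`.
Endomorphisms act on the right: `x·Q_a` is `Q a x`; a paper product `A B`
(apply `A`, then `B`) corresponds to the Mathlib product `B * A`. -/
structure WeakQuadraticJordan (k J : Type*) [Field k] [AddCommGroup J]
    [Module k J] where
  Q : J → Module.End k J
  one : J
  one_ne_zero : one ≠ 0
  Q_smul : ∀ (t : k) (a : J), Q (t • a) = (t ^ 2) • Q a
  Qbil : J →ₗ[k] J →ₗ[k] Module.End k J
  Qbil_apply : ∀ a b : J, Qbil a b = Q (a + b) - Q a - Q b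
  QJ1 : Q one = 1
  QJ2 : ∀ a b x : J, Qbil a (Q a x) b = Q a (Qbil b x a)
  QJ3 : ∀ a b : J, Q (Q a b) = Q a * Q b * Q a

namespace WeakQuadraticJordan

variable {k J : Type*} [Field k] [AddCommGroup J] [Module k J]

/-- `V W a b` is the endomorphism `V_{a,b} : x ↦ b·Q_{a,x}`. -/
def V (W : WeakQuadraticJordan k J) (a b : J) : Module.End k J where
  toFun x := W.Qbil a x b
  map_add' x y := by simp
  map_smul' t x := by simp

/-- `δ` is an `ε`-derivation: `δ(a·Q_b) = ε·δ(a)·Q_b + a·Q_{b,δ(b)}`. -/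
def IsEpsDerivation (W : WeakQuadraticJordan k J) (ε : k) (δ : Module.End k J) : Prop :=
  ∀ a b : J, δ (W.Q b a) = ε • W.Q b (δ a) + W.Qbil b (δ b) a

/-- Every nonzero element is invertible (`Q_a` is a unit of `End k J`). -/
def IsDivision (W : WeakQuadraticJordan k J) : Prop :=
  ∀ a : J, a ≠ 0 → IsUnit (W.Q a)

end WeakQuadraticJordan

namespace WeakQuadraticJordan

variable {k J : Type*} [Field k] [AddCommGroup J] [Module k J]

lemma Qbil_comm (W : WeakQuadraticJordan k J) (a b : J) : W.Qbil a b = W.Qbil b a := by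
  rw [W.Qbil_apply, W.Qbil_apply, add_comm a b]
  abel

lemma Qbil_self (W : WeakQuadraticJordan k J) (a : J) : W.Qbil a a = (2 : k) • W.Q a := by
  rw [W.Qbil_apply, ← two_smul k a, W.Q_smul]
  module

/-- If `b = a⁻¹`, then `V_{a,b} = 2`. -/
lemma Qbil_inverse (W : WeakQuadraticJordan k J) {a b : J} (ha : IsUnit (W.Q a))
    (hb : W.Q a b = a) (y : J) : W.Qbil a y b = (2 : k) • y := by
  have hbij := (Module.End.isUnit_iff _).mp ha
  have key : ∀ c : J, W.Qbil c b a = (2 : k) • c := fun c => by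
    apply hbij.1
    rw [← W.QJ2, hb, W.Qbil_self, map_smul, LinearMap.smul_apply]
  obtain ⟨x, rfl⟩ := hbij.2 y
  rw [W.QJ2, W.Qbil_comm, key, map_smul]

end WeakQuadraticJordan

/-- For an `ε`-derivation `δ` and an invertible `a`:
`δ(a⁻¹) = −ε·δ(a)·Q_a⁻¹`. -/
theorem eps_derivation_inverse {k J : Type*} [Field k] [AddCommGroup J] [Module k J]
    (W : WeakQuadraticJordan k J) (ε : k) (hε : ε = 1 ∨ ε = -1)
    (δ : Module.End k J) (hδ : W.IsEpsDerivation ε δ)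
    (a : J) (ha : IsUnit (W.Q a)) :
    δ ((↑ha.unit⁻¹ : Module.End k J) a)
      = (-ε) • (↑ha.unit⁻¹ : Module.End k J) (δ a) := by
  have hinv : ∀ x : J, W.Q a ((↑ha.unit⁻¹ : Module.End k J) x) = x := fun x => by
    rw [← Module.End.mul_apply, ha.mul_val_inv, Module.End.one_apply]
  have h := hδ ((↑ha.unit⁻¹ : Module.End k J) a) a
  rw [W.Qbil_inverse ha (hinv a), hinv] at h
  have hεε : ε * ε = 1 := by rcases hε with rfl | rfl <;> ring
  apply ((Module.End.isUnit_iff _).mp ha).1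
  rw [map_smul, hinv]
  have h' : ε • W.Q a (δ ((↑ha.unit⁻¹ : Module.End k J) a)) = -δ a := by
    rw [two_smul, ← add_assoc] at h
    exact eq_neg_of_add_eq_zero_left (add_eq_right.mp h.symm)
  rw [neg_smul, ← smul_neg, ← h', smul_smul, hεε, one_smul]
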